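/- Let D be an (a,b)-semi-hybrid domain on a tree T satisfying diversity. The following are equivalent: (a) every tops-only and strategy-proof rule f : D^2 → A behaves like a dictatorship on ⟨a, b|T⟩; (b) for every n ≥ 2, every tops-only and strategy-proof rule f : D^n → A behaves like a dictatorship on ⟨a, b|T⟩. -/

import Mathlib

open Classical

/-- A strict preference over `A`, represented as a ranking bijection:
`P k` is the `(k+1)`-th ranked alternative. -/
abbrev Pref (A : Type*) [Fintype A] := Fin (Fintype.card A) ≃ A

variable {A : Type*} [Fintype A] [DecidableEq A] [Nonempty A]

/-- `rk P k` : the `(k+1)`-th ranked alternative of `P` (0-indexed, so `rk P 0 = r₁(P)`). -/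
noncomputable def rk (P : Pref A) (k : ℕ) : A :=
  if h : k < Fintype.card A then P ⟨k, h⟩ else Classical.arbitrary A

/-- The peak `r₁(P)`. -/
noncomputable def peak (P : Pref A) : A := rk P 0

/-- The second-ranked alternative `r₂(P)`. -/
noncomputable def second (P : Pref A) : A := rk P 1

/-- `a` is strictly preferred to `b` under `P`. -/
def prefers (P : Pref A) (a b : A) : Prop := P.symm a < P.symm b

/-- Two preferences are completely reversed. -/
def Reversed (P P' : Pref A) : Prop := ∀ a b : A, prefers P a b ↔ prefers P' b a

/-- A profile lies in the domain `D`. -/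
def InDom (D : Set (Pref A)) {n : ℕ} (P : Fin n → Pref A) : Prop := ∀ i, P i ∈ D

/-- Unanimity (an SCF satisfying it is called a rule). -/
def IsRule (D : Set (Pref A)) {n : ℕ} (f : (Fin n → Pref A) → A) : Prop :=
  ∀ P : Fin n → Pref A, InDom D P → ∀ a : A, (∀ i, peak (P i) = a) → f P = a

/-- Strategy-proofness (relative to the domain `D`). -/
def StrategyProof (D : Set (Pref A)) {n : ℕ} (f : (Fin n → Pref A) → A) : Prop :=
  ∀ P : Fin n → Pref A, InDom D P → ∀ i : Fin n, ∀ Q ∈ D,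
    f P = f (Function.update P i Q) ∨ prefers (P i) (f P) (f (Function.update P i Q))

/-- The tops-only property. -/
def TopsOnly (D : Set (Pref A)) {n : ℕ} (f : (Fin n → Pref A) → A) : Prop :=
  ∀ P P' : Fin n → Pref A, InDom D P → InDom D P' →
    (∀ i, peak (P i) = peak (P' i)) → f P = f P'

/-- Anonymity. -/
def Anonymous (D : Set (Pref A)) {n : ℕ} (f : (Fin n → Pref A) → A) : Prop :=
  ∀ P : Fin n → Pref A, InDom D P → ∀ σ : Equiv.Perm (Fin n), f (P ∘ σ) = f P

/-- `f` behaves like a dictatorship on `B`. -/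
def DictatorOn (D : Set (Pref A)) {n : ℕ} (f : (Fin n → Pref A) → A) (B : Set A) : Prop :=
  ∃ i : Fin n, ∀ P : Fin n → Pref A, InDom D P → (∀ j, peak (P j) ∈ B) → f P = peak (P i)

/-- `f` is a dictatorship. -/
def Dictatorship (D : Set (Pref A)) {n : ℕ} (f : (Fin n → Pref A) → A) : Prop :=
  DictatorOn D f Set.univ

/-- A dictatorial domain. -/
def DictatorialDomain (D : Set (Pref A)) : Prop :=
  ∀ n : ℕ, 2 ≤ n → ∀ f : (Fin n → Pref A) → A,
    IsRule D f → StrategyProof D f → Dictatorship D f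

/-- A tops-only domain. -/
def TopsOnlyDomain (D : Set (Pref A)) : Prop :=
  ∀ n : ℕ, 2 ≤ n → ∀ f : (Fin n → Pref A) → A,
    IsRule D f → StrategyProof D f → TopsOnly D f

/-- Adjacency of two alternatives relative to the domain `D`. -/
def DomAdjacent (D : Set (Pref A)) (a b : A) : Prop :=
  ∃ P ∈ D, ∃ P' ∈ D, peak P = a ∧ second P = b ∧ peak P' = b ∧ second P' = a ∧
    ∀ k : ℕ, 2 ≤ k → rk P k = rk P' k

/-- The adjacency graph `G_∼` of the domain `D`. -/
noncomputable def adjGraph (D : Set (Pref A)) : SimpleGraph A :=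
  SimpleGraph.fromRel (DomAdjacent D)

/-- Path-connectedness of the domain. -/
def PathConnectedDom (D : Set (Pref A)) : Prop := (adjGraph D).Connected

/-- Diversity: the domain contains two completely reversed preferences. -/
def Diversity (D : Set (Pref A)) : Prop := ∃ P ∈ D, ∃ P' ∈ D, Reversed P P'

/-- `S(D^a)`: the set of alternatives second-ranked in some preference of `D` with peak `a`. -/
def secondsSet (D : Set (Pref A)) (a : A) : Set A := {b | ∃ P ∈ D, peak P = a ∧ second P = b}

/-- Leaf symmetry. -/
def LeafSymmetry (D : Set (Pref A)) : Prop :=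
  ∀ x : A, (∃! y, (adjGraph D).Adj x y) →
    (∃ u ∈ secondsSet D x, ∃ v ∈ secondsSet D x, u ≠ v) →
    ∃ z ∈ secondsSet D x, ¬ (adjGraph D).Adj x z ∧ x ∈ secondsSet D z

/-- Unidimensionality: path-connectedness, diversity and leaf symmetry. -/
def Unidimensional (D : Set (Pref A)) : Prop :=
  PathConnectedDom D ∧ Diversity D ∧ LeafSymmetry D

/-- The unique seconds property. -/
def UniqueSeconds (D : Set (Pref A)) : Prop := ∃ x b : A, secondsSet D x = {b}

/-- Minimal richness. -/
def MinimallyRich (D : Set (Pref A)) : Prop := ∀ a : A, ∃ P ∈ D, peak P = a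

/-- The vertex set `⟨x, y|T⟩` of the (in a tree, unique) shortest path between `x` and `y`. -/
def intv (T : SimpleGraph A) (x y : A) : Set A :=
  {z | T.dist x z + T.dist z y = T.dist x y}

/-- `a'` is the projection of `a` onto `B` in `T`. -/
def IsProjPt (T : SimpleGraph A) (B : Set A) (a a' : A) : Prop :=
  a' ∈ B ∧ ∀ b ∈ B, a' ∈ intv T a b

/-- The projection `Proj(a, B)` of `a` onto a path-closed set `B` in the tree `T`. -/
noncomputable def projOn (T : SimpleGraph A) (B : Set A) (a : A) : A :=
  if h : ∃ a', IsProjPt T B a a' then h.choose else a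

/-- `Γ(P)`: the vertex set of the minimal subtree of `T` spanning all the peaks. -/
def gammaSet (T : SimpleGraph A) {n : ℕ} (P : Fin n → Pref A) : Set A :=
  {c | ∃ i j : Fin n, c ∈ intv T (peak (P i)) (peak (P j))}

/-- The projection rule on `T` w.r.t. `xbar`. -/
noncomputable def projRule (T : SimpleGraph A) (xbar : A) {n : ℕ}
    (P : Fin n → Pref A) : A :=
  projOn T (gammaSet T P) xbar

/-- Single-peakedness on a tree. -/
def SinglePeaked (T : SimpleGraph A) (P : Pref A) : Prop :=
  ∀ c d : A, c ≠ d → c ∈ intv T (peak P) d → prefers P c d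

/-- Semi-single-peakedness on `T` w.r.t. the threshold `xbar`. -/
def SemiSP (T : SimpleGraph A) (xbar : A) (P : Pref A) : Prop :=
  (∀ c d : A, c ∈ intv T (peak P) xbar → d ∈ intv T (peak P) xbar → c ≠ d →
    c ∈ intv T (peak P) d → prefers P c d) ∧
  (∀ c : A, c ∉ intv T (peak P) xbar →
    prefers P (projOn T (intv T (peak P) xbar) c) c)

/-- A semi-single-peaked domain. -/
def SemiSPDomain (D : Set (Pref A)) : Prop :=
  ∃ (T : SimpleGraph A) (xbar : A), T.IsTree ∧
    D ⊆ {P | SemiSP T xbar P} ∧ (adjGraph D).Connected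

/-- `A^{a⇀b}`: the alternatives whose path to `b` goes through `a`. -/
def sideSet (T : SimpleGraph A) (a b : A) : Set A := {z | a ∈ intv T z b}

/-- `x = max^P(B)`: `x` is `P`'s best alternative of `B`. -/
def IsBestOf (P : Pref A) (x : A) (B : Set A) : Prop :=
  x ∈ B ∧ ∀ y ∈ B, y ≠ x → prefers P x y

/-- `a` and `b` are dual-thresholds in the tree `T`. -/
def DualThresholds (T : SimpleGraph A) (a b : A) : Prop :=
  a ≠ b ∧ ∀ c : A, c ∉ intv T a b →
    projOn T (intv T a b) c = a ∨ projOn T (intv T a b) c = b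

/-- An `(a,b)`-semi-hybrid preference on `T`. -/
def SemiHybridPref (T : SimpleGraph A) (a b : A) (P : Pref A) : Prop :=
  (peak P ∈ sideSet T a b \ {a} → SemiSP T a P ∧ IsBestOf P b (sideSet T b a)) ∧
  (peak P ∈ sideSet T b a \ {b} → SemiSP T b P ∧ IsBestOf P a (sideSet T a b)) ∧
  (peak P ∈ intv T a b → IsBestOf P a (sideSet T a b) ∧ IsBestOf P b (sideSet T b a))

/-- `x` is a leaf of the subgraph of `G` induced on `B`. -/
def IsLeafOn (G : SimpleGraph A) (B : Set A) (x : A) : Prop :=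
  x ∈ B ∧ ∃! y, y ∈ B ∧ G.Adj x y

/-- `D` is an `(a,b)`-semi-hybrid domain on the tree `T`. -/
def SemiHybridDomainOn (D : Set (Pref A)) (T : SimpleGraph A) (a b : A) : Prop :=
  T.IsTree ∧ DualThresholds T a b ∧ D ⊆ {P | SemiHybridPref T a b P} ∧
  (adjGraph D).Connected ∧
  (¬ ∃ (T' : SimpleGraph A) (a' b' : A), T'.IsTree ∧ DualThresholds T' a' b' ∧
      D ⊆ {P | SemiHybridPref T' a' b' P} ∧ intv T' a' b' ⊂ intv T a b) ∧
  ((adjGraph D).IsTree →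
    ∀ x : A, IsLeafOn (adjGraph D) (intv T a b) x →
      ∃ P ∈ D, ¬ SemiSP (adjGraph D) x P)

/-- `D` is a semi-hybrid domain. -/
def SemiHybridDomain (D : Set (Pref A)) : Prop :=
  ∃ (T : SimpleGraph A) (a b : A), SemiHybridDomainOn D T a b

/-- An `(a,b)`-hybrid preference on `T`. -/
def HybridPref (T : SimpleGraph A) (a b : A) (P : Pref A) : Prop :=
  (∀ y z : A, ((y ∈ sideSet T a b ∧ z ∈ sideSet T a b) ∨
      (y ∈ sideSet T b a ∧ z ∈ sideSet T b a)) → y ≠ z →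
    y ∈ intv T (peak P) z → prefers P y z) ∧
  (peak P ∈ sideSet T a b \ {a} → IsBestOf P a (intv T a b)) ∧
  (peak P ∈ sideSet T b a \ {b} → IsBestOf P b (intv T a b))

/-- `D` is an `(a,b)`-hybrid domain on the tree `T`. -/
def HybridDomainOn (D : Set (Pref A)) (T : SimpleGraph A) (a b : A) : Prop :=
  T.IsTree ∧ DualThresholds T a b ∧ D ⊆ {P | HybridPref T a b P} ∧
  (adjGraph D).Connected ∧
  (¬ ∃ (T' : SimpleGraph A) (a' b' : A), T'.IsTree ∧ DualThresholds T' a' b' ∧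
      D ⊆ {P | HybridPref T' a' b' P} ∧ intv T' a' b' ⊂ intv T a b) ∧
  3 ≤ (intv T a b).ncard

/-- `f` is an `(a,b)`-hybrid rule on the tree `T`. -/
def IsHybridRule (D : Set (Pref A)) {n : ℕ} (f : (Fin n → Pref A) → A)
    (T : SimpleGraph A) (a b : A) : Prop :=
  T.IsTree ∧ DualThresholds T a b ∧ 3 ≤ (intv T a b).ncard ∧
  ∃ i : Fin n, ∀ P : Fin n → Pref A, InDom D P →
    (peak (P i) ∈ intv T a b → f P = peak (P i)) ∧
    (peak (P i) ∈ sideSet T a b \ {a} → f P = projOn T (gammaSet T P) a) ∧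
    (peak (P i) ∈ sideSet T b a \ {b} → f P = projOn T (gammaSet T P) b)

/-- The PNT rule on `T` w.r.t. the edge `(x, y)`, with the two distinguished voters `i, j`. -/
noncomputable def pntRule (T : SimpleGraph A) (x y : A) {n : ℕ} (i j : Fin n)
    (P : Fin n → Pref A) : A :=
  if peak (P i) ∈ sideSet T y x then peak (P i)
  else if peak (P j) ∈ sideSet T x y then projOn T (gammaSet T P) x
  else if prefers (P j) x y then x else y

/-- `(x, y)` is a critical spot in `T` for the domain `D`. -/
def CriticalSpot (D : Set (Pref A)) (T : SimpleGraph A) (x y : A) : Prop :=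
  T.Adj x y ∧
  (∀ P ∈ D, peak P ∈ sideSet T x y → SemiSP T y P) ∧
  (∀ P ∈ D, peak P ∈ sideSet T y x → IsBestOf P x (sideSet T x y)) ∧
  (∃ P ∈ D, ∃ P' ∈ D, peak P = peak P' ∧ peak P ∈ sideSet T y x ∧
    prefers P y x ∧ prefers P' x y)

/-- `x` is a path in the graph `G` (pairwise distinct, consecutive vertices adjacent). -/
def IsPathIn (G : SimpleGraph A) {v : ℕ} (x : Fin v → A) : Prop :=
  Function.Injective x ∧
  ∀ (k : ℕ) (h : k + 1 < v), G.Adj (x ⟨k, Nat.lt_of_succ_lt h⟩) (x ⟨k + 1, h⟩)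

/-- `x` is a cycle in the graph `G`. -/
def IsCycleIn (G : SimpleGraph A) {v : ℕ} (x : Fin v → A) : Prop :=
  Function.Injective x ∧
  (∀ (k : ℕ) (h : k + 1 < v), G.Adj (x ⟨k, Nat.lt_of_succ_lt h⟩) (x ⟨k + 1, h⟩)) ∧
  ∀ (h : 0 < v), G.Adj (x ⟨v - 1, Nat.sub_lt h Nat.one_pos⟩) (x ⟨0, h⟩)

/-- The line `L^A` induced by the ranking of the preference `P`. -/
noncomputable def lineOf (P : Pref A) : SimpleGraph A :=
  SimpleGraph.fromRel (fun a b =>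
    ∃ k : ℕ, k + 1 < Fintype.card A ∧ rk P k = a ∧ rk P (k + 1) = b)

/-- The median of three natural numbers. -/
def med3 (a b c : ℕ) : ℕ := max (min a b) (min (max a b) c)

/-- The two-voter profile in which voter `i` reports `Pi` and the other voter reports `Q`. -/
noncomputable def prof2 (i : Fin 2) (Pi Q : Pref A) : Fin 2 → Pref A :=
  Function.update (fun _ => Q) i Pi

/-!
A tops-only rule is a function of the reported peaks. Moving one reported peak along an edge of the
adjacency graph can change a strategy-proof outcome only if the outcome was that peak; hence, on a
path-connected domain, peaks in the free zone produce an outcome in the free zone.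

At profiles with peaks in the free zone, let the voters be split into two groups with a common peak
each. The outcome is then a two-voter function on the free zone. Projecting peaks onto the free
zone makes it a strategy-proof two-voter function on all peaks, and replacing the outcome by a
median with the threshold when both peaks lie on the same side makes it unanimous. As all two-voter
rules are dictatorial on the free zone, one of the two groups is decisive there. The decisive
coalitions therefore form an ultrafilter, which is principal since there are finitely many voters,
and its generator is the dictator.
-/

/-! ### Betweenness and medians in trees -/

section Betweenness

variable {V : Type*} {T : SimpleGraph V} {x y z m c : V}

theorem mem_intv : z ∈ intv T x y ↔ T.dist x z + T.dist z y = T.dist x y := Iff.rfl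

theorem left_mem_intv (T : SimpleGraph V) (x y : V) : x ∈ intv T x y := by
  simp [mem_intv]

theorem right_mem_intv (T : SimpleGraph V) (x y : V) : y ∈ intv T x y := by
  simp [mem_intv]

theorem intv_comm (T : SimpleGraph V) (x y : V) : intv T x y = intv T y x := by
  ext z
  rw [mem_intv, mem_intv, T.dist_comm (u := x) (v := z), T.dist_comm (u := z) (v := y),
    T.dist_comm (u := x) (v := y), add_comm]

theorem intv_self (hT : T.Connected) (x : V) : intv T x x = {x} := by
  ext z
  simp [mem_intv, hT.dist_eq_zero_iff, T.dist_comm (u := z), eq_comm]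

theorem mem_intv_trans (hT : T.Connected) (hm : m ∈ intv T x y) (hz : z ∈ intv T x m) :
    z ∈ intv T x y ∧ m ∈ intv T z y := by
  simp only [mem_intv] at *
  have := hT.dist_triangle (u := x) (v := z) (w := y)
  have := hT.dist_triangle (u := z) (v := m) (w := y)
  constructor <;> omega

theorem eq_of_mem_intv_of_mem_intv (hT : T.Connected) (h₁ : m ∈ intv T x z)
    (h₂ : z ∈ intv T x m) : m = z := by
  rw [mem_intv] at *
  exact hT.dist_eq_zero_iff.1 (by omega)

theorem mem_support_iff_mem_intv (hT : T.IsTree) {p : T.Walk x y} (hp : p.IsPath) :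
    z ∈ p.support ↔ z ∈ intv T x y := by
  obtain ⟨r, hr, hr_length⟩ := hT.connected.exists_path_of_dist x y
  obtain rfl : p = r := (hT.existsUnique_path x y).unique hp hr
  constructor
  · intro hz
    have h_length : (p.takeUntil z hz).length + (p.dropUntil z hz).length = p.length := by
      rw [← SimpleGraph.Walk.length_append, SimpleGraph.Walk.take_spec]
    have := T.dist_le (p.takeUntil z hz)
    have := T.dist_le (p.dropUntil z hz)
    have := hT.connected.dist_triangle (u := x) (v := z) (w := y)
    rw [mem_intv]
    omega
  · intro hz
    obtain ⟨q₁, -, hq₁⟩ := hT.connected.exists_path_of_dist x z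
    obtain ⟨q₂, -, hq₂⟩ := hT.connected.exists_path_of_dist z y
    have h_path : (q₁.append q₂).IsPath := SimpleGraph.Walk.isPath_of_length_eq_dist _ <| by
      rw [SimpleGraph.Walk.length_append, hq₁, hq₂, mem_intv.1 hz]
    rw [(hT.existsUnique_path x y).unique hp h_path]
    simp

theorem mem_intv_left_or_right (hT : T.IsTree) (hm : m ∈ intv T x y) (hz : z ∈ intv T x y) :
    z ∈ intv T x m ∨ z ∈ intv T m y := by
  obtain ⟨p, hp, -⟩ := hT.connected.exists_path_of_dist x y
  have hmp := (mem_support_iff_mem_intv hT hp).2 hm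
  have hzp := (mem_support_iff_mem_intv hT hp).2 hz
  rw [← p.take_spec hmp, SimpleGraph.Walk.mem_support_append_iff] at hzp
  exact hzp.imp (mem_support_iff_mem_intv hT (hp.takeUntil hmp)).1
    (mem_support_iff_mem_intv hT (hp.dropUntil hmp)).1

theorem mem_intv_of_intv_inter_subset (hT : T.IsTree)
    (h : intv T x m ∩ intv T m y ⊆ {m}) : m ∈ intv T x y := by
  obtain ⟨p, hp, -⟩ := hT.connected.exists_path_of_dist x m
  obtain ⟨q, hq, -⟩ := hT.connected.exists_path_of_dist m y
  have hq_nodup := hq.support_nodup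
  rw [← SimpleGraph.Walk.cons_tail_support, List.nodup_cons] at hq_nodup
  have h_path : (p.append q).IsPath := by
    rw [SimpleGraph.Walk.isPath_def, SimpleGraph.Walk.support_append, List.nodup_append']
    refine ⟨hp.support_nodup, hq_nodup.2, fun v hvp hvq ↦ hq_nodup.1 ?_⟩
    have hvm : v = m := h ⟨(mem_support_iff_mem_intv hT hp).1 hvp,
      (mem_support_iff_mem_intv hT hq).1 (List.mem_of_mem_tail hvq)⟩
    exact hvm ▸ hvq
  exact (mem_support_iff_mem_intv hT h_path).1 (by simp)

/-- `m` lies on all three paths joining the pairs of `x`, `y`, `z`. In a tree this is the unique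
vertex at which the three paths meet. -/
structure IsMedian (T : SimpleGraph V) (m x y z : V) : Prop where
  mem_left_mid : m ∈ intv T x y
  mem_left_right : m ∈ intv T x z
  mem_mid_right : m ∈ intv T y z

theorem IsMedian.swap_right (h : IsMedian T m x y z) : IsMedian T m x z y :=
  ⟨h.mem_left_right, h.mem_left_mid, intv_comm T y z ▸ h.mem_mid_right⟩

theorem exists_isMedian (hT : T.IsTree) (x y z : V) : ∃ m, IsMedian T m x y z := by
  have := hT.connected.nonempty
  let totalDist : V → ℕ := fun v ↦ T.dist x v + T.dist y v + T.dist z v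
  let m := Function.argmin totalDist
  have h_min (v : V) : T.dist x m + T.dist y m + T.dist z m ≤
      T.dist x v + T.dist y v + T.dist z v := Function.argmin_le totalDist v
  -- A vertex `v` common to `⟨s, m⟩` and `⟨m, t⟩` is closer than `m` to both `s` and `t`, and
  -- at most `d(m, v)` farther from the third vertex.
  have h_between {s t r : V} (h_sum : ∀ v, T.dist s m + T.dist t m + T.dist r m ≤
      T.dist s v + T.dist t v + T.dist r v) : m ∈ intv T s t := by
    refine mem_intv_of_intv_inter_subset hT fun v ⟨hsv, hvt⟩ ↦ ?_
    rw [mem_intv] at hsv hvt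
    have := h_sum v
    have := hT.connected.dist_triangle (u := r) (v := m) (w := v)
    rw [T.dist_comm (u := v) (v := m)] at hsv
    rw [T.dist_comm (u := v) (v := t), T.dist_comm (u := m) (v := t)] at hvt
    exact (hT.connected.dist_eq_zero_iff.1 (by omega : T.dist m v = 0)).symm
  exact ⟨m, h_between (r := z) h_min, h_between (r := y) fun v ↦ by have := h_min v; omega,
    h_between (r := x) fun v ↦ by have := h_min v; omega⟩

theorem isProjPt_self {B : Set V} (hc : c ∈ B) : IsProjPt T B c c :=
  ⟨hc, fun v _ ↦ left_mem_intv T c v⟩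

theorem IsMedian.isProjPt (hT : T.IsTree) (h : IsMedian T m x y c) :
    IsProjPt T (intv T x y) c m := by
  have h_side {s v : V} (hs : m ∈ intv T c s) (ht : v ∈ intv T s m) : m ∈ intv T c v := by
    rw [intv_comm] at hs ⊢
    exact (mem_intv_trans hT.connected hs ht).2
  refine ⟨h.mem_left_mid, fun v hv ↦ ?_⟩
  rcases mem_intv_left_or_right hT h.mem_left_mid hv with hv | hv
  · exact h_side (intv_comm T x c ▸ h.mem_left_right) hv
  · exact h_side (intv_comm T y c ▸ h.mem_mid_right) (intv_comm T m y ▸ hv)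

variable [Fintype V] {B : Set V}

theorem isProjPt_projOn_of_ne (h : projOn T B c ≠ c) : IsProjPt T B c (projOn T B c) := by
  by_cases h_exists : ∃ c', IsProjPt T B c c'
  · rw [projOn, dif_pos h_exists]
    exact h_exists.choose_spec
  · exact absurd (dif_neg h_exists) h

theorem IsProjPt.projOn_eq (hT : T.Connected) (h : IsProjPt T B c m) : projOn T B c = m := by
  have h_exists : ∃ c', IsProjPt T B c c' := ⟨m, h⟩
  rw [projOn, dif_pos h_exists]
  exact eq_of_mem_intv_of_mem_intv hT (h_exists.choose_spec.2 m h.1)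
    (h.2 _ h_exists.choose_spec.1)

theorem isMedian_projOn_intv (hT : T.IsTree) (x y z : V) :
    IsMedian T (projOn T (intv T x y) z) x y z := by
  obtain ⟨m, hm⟩ := exists_isMedian hT x y z
  rwa [(hm.isProjPt hT).projOn_eq hT.connected]

end Betweenness

/-! ### Weak preference and adjacency -/

section WeakPreference

variable {α : Type*} [Fintype α] {P : Pref α} {u v w x y : α}

/-- `u` is at least as good as `v` under `P`. -/
def WeaklyPrefers (P : Pref α) (u v : α) : Prop := P.symm u ≤ P.symm v

theorem weaklyPrefers_iff : WeaklyPrefers P u v ↔ u = v ∨ prefers P u v := by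
  rw [WeaklyPrefers, le_iff_eq_or_lt, P.symm.injective.eq_iff, prefers]

theorem WeaklyPrefers.of_prefers (h : prefers P u v) : WeaklyPrefers P u v := le_of_lt h

theorem WeaklyPrefers.refl (P : Pref α) (u : α) : WeaklyPrefers P u u := le_rfl

theorem WeaklyPrefers.trans (h : WeaklyPrefers P u v) (h' : WeaklyPrefers P v w) :
    WeaklyPrefers P u w := le_trans h h'

theorem WeaklyPrefers.antisymm (h : WeaklyPrefers P u v) (h' : WeaklyPrefers P v u) : u = v :=
  P.symm.injective (le_antisymm h h')

theorem IsBestOf.weaklyPrefers {B : Set α} (h : IsBestOf P x B) (hy : y ∈ B) :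
    WeaklyPrefers P x y := by
  rcases eq_or_ne y x with rfl | hne
  · exact .refl P y
  · exact .of_prefers (h.2 y hy hne)

theorem rk_symm [Nonempty α] (P : Pref α) (u : α) : rk P (P.symm u) = u := by
  simp [rk]

theorem symm_rk [Nonempty α] {k : ℕ} (P : Pref α) (hk : k < Fintype.card α) :
    (P.symm (rk P k) : ℕ) = k := by
  simp [rk, hk]

theorem peak_weaklyPrefers [Nonempty α] (P : Pref α) (u : α) : WeaklyPrefers P (peak P) u := by
  rw [WeaklyPrefers, Fin.le_def, peak, symm_rk P Fintype.card_pos]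
  exact Nat.zero_le _

theorem second_weaklyPrefers [Nonempty α] (hu : u ≠ peak P) :
    WeaklyPrefers P (second P) u := by
  have hu_pos : (P.symm u : ℕ) ≠ 0 := fun h ↦ hu <| by rw [peak, ← h, rk_symm]
  have h_card : 1 < Fintype.card α := by have := (P.symm u).isLt; omega
  rw [WeaklyPrefers, Fin.le_def, second, symm_rk P h_card]
  omega

end WeakPreference

section Adjacency

variable {α : Type*} [Fintype α] [Nonempty α] {D : Set (Pref α)} {P P' : Pref α} {u w x x' : α}

theorem domAdjacent_of_adj (h : (adjGraph D).Adj x x') : DomAdjacent D x x' := by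
  rcases ((SimpleGraph.fromRel_adj _ _ _).1 h).2 with h | ⟨P, hP, P', hP', h₁, h₂, h₃, h₄, h₅⟩
  · exact h
  · exact ⟨P', hP', P, hP, h₃, h₄, h₁, h₂, fun k hk ↦ (h₅ k hk).symm⟩

theorem exists_peak_eq_of_connected [Nontrivial α] (hG : (adjGraph D).Connected) (x : α) :
    ∃ P ∈ D, peak P = x := by
  obtain ⟨y, hxy⟩ := hG.preconnected.exists_adj_of_nontrivial x
  obtain ⟨P, hP, -, -, hx, -⟩ := domAdjacent_of_adj hxy
  exact ⟨P, hP, hx⟩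

theorem symm_eq_of_rk_eq (h : ∀ k, 2 ≤ k → rk P k = rk P' k) (h₀ : u ≠ peak P)
    (h₁ : u ≠ second P) : P.symm u = P'.symm u := by
  have hk : 2 ≤ (P.symm u : ℕ) := by
    by_contra! hk
    interval_cases h_rank : (P.symm u : ℕ)
    · exact h₀ (by rw [peak, ← h_rank, rk_symm])
    · exact h₁ (by rw [second, ← h_rank, rk_symm])
  rw [← Fin.val_inj, ← symm_rk P' (P.symm u).isLt, ← h _ hk, rk_symm]

theorem eq_of_weaklyPrefers_of_rk_eq (hx : peak P = x) (hx' : second P = x')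
    (hx'₀ : peak P' = x') (h : ∀ k, 2 ≤ k → rk P k = rk P' k) (hw : w ≠ x)
    (h_wu : WeaklyPrefers P w u) (h_uw : WeaklyPrefers P' u w) : u = w := by
  subst hx hx'
  have hu : u ≠ peak P := by
    rintro rfl
    exact hw (h_wu.antisymm (peak_weaklyPrefers P w))
  by_cases hw' : w = second P
  · subst hw'
    exact h_uw.antisymm (hx'₀ ▸ peak_weaklyPrefers P' u)
  by_cases hu' : u = second P
  · subst hu'
    exact (second_weaklyPrefers hw).antisymm h_wu
  · refine WeaklyPrefers.antisymm ?_ h_wu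
    rwa [WeaklyPrefers, symm_eq_of_rk_eq h hu hu', symm_eq_of_rk_eq h hw hw']

end Adjacency

/-! ### One voter reporting a peak -/

section OneVoter

variable {α : Type*} [Fintype α] [Nonempty α] {D : Set (Pref α)} {h : α → α} {x x' : α}

/-- Strategy-proofness of a one-voter rule which depends only on the reported peak: a voter whose
preference lies in `D` never gains by misreporting its peak. -/
def PeakTruthful (D : Set (Pref α)) (h : α → α) : Prop :=
  ∀ P ∈ D, ∀ x, WeaklyPrefers P (h (peak P)) (h x)

theorem PeakTruthful.eq_of_adj (hh : PeakTruthful D h) (hx : (adjGraph D).Adj x x')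
    (hne : h x ≠ x) : h x' = h x := by
  obtain ⟨P, hP, P', hP', hPx, hPx', hP'x', -, h_rk⟩ := domAdjacent_of_adj hx
  exact eq_of_weaklyPrefers_of_rk_eq hPx hPx' hP'x' h_rk hne (hPx ▸ hh P hP x')
    (hP'x' ▸ hh P' hP' x)

/-- An outcome outside the range of `r` is never the reported peak, so no step along the image of
a walk under `r` can change it. -/
theorem PeakTruthful.eq_of_notMem_range (hh : PeakTruthful D h) (hG : (adjGraph D).Connected)
    {r : α → α} (hr : ∀ s t, (adjGraph D).Adj s t → r s = r t ∨ (adjGraph D).Adj (r s) (r t))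
    {x y : α} (hx : h (r x) ∉ Set.range r) : h (r y) = h (r x) := by
  obtain ⟨p⟩ := hG.preconnected x y
  induction p with
  | nil => rfl
  | @cons s t _ hst _ ih =>
    have h_step : h (r t) = h (r s) := by
      rcases hr s t hst with h_eq | h_adj
      · rw [h_eq]
      · exact hh.eq_of_adj h_adj fun h_fix ↦ hx ⟨s, h_fix.symm⟩
    rw [ih (h_step ▸ hx), h_step]

end OneVoter

/-! ### Sides and free zone -/

section Sides

variable {V : Type*} {T : SimpleGraph V} {a b c v x z : V}

theorem mem_sideSet : z ∈ sideSet T a b ↔ a ∈ intv T z b := Iff.rfl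

theorem left_mem_sideSet (T : SimpleGraph V) (a b : V) : a ∈ sideSet T a b :=
  left_mem_intv T a b

theorem notMem_sideSet_of_mem (hT : T.Connected) (hab : a ≠ b) (hz : z ∈ sideSet T a b) :
    z ∉ sideSet T b a :=
  fun hz' ↦ hab (eq_of_mem_intv_of_mem_intv hT hz hz')

theorem eq_of_mem_sideSet_of_mem_intv (hT : T.Connected) (hz : z ∈ sideSet T a b)
    (hz' : z ∈ intv T a b) : z = a := by
  rw [mem_sideSet, intv_comm] at hz
  rw [intv_comm] at hz'
  exact eq_of_mem_intv_of_mem_intv hT hz' hz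

theorem mem_sideSet_of_mem_intv (hT : T.Connected) (hx : x ∈ sideSet T a b)
    (hv : v ∈ intv T x a) : v ∈ sideSet T a b :=
  (mem_intv_trans hT hx hv).2

theorem isProjPt_intv_of_mem_sideSet (hT : T.Connected) (hz : z ∈ sideSet T a b) :
    IsProjPt T (intv T a b) z a := by
  refine ⟨left_mem_intv T a b, fun v hv ↦ ?_⟩
  rw [mem_sideSet, intv_comm] at hz
  rw [intv_comm] at hv ⊢
  exact (mem_intv_trans hT hz hv).2

variable [Fintype V]

theorem projOn_intv_of_mem_sideSet (hT : T.Connected) (hz : z ∈ sideSet T a b) :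
    projOn T (intv T a b) z = a :=
  (isProjPt_intv_of_mem_sideSet hT hz).projOn_eq hT

theorem projOn_of_mem {B : Set V} (hT : T.Connected) (hz : z ∈ B) : projOn T B z = z :=
  (isProjPt_self hz).projOn_eq hT

theorem projOn_intv_mem (hT : T.IsTree) (x y z : V) : projOn T (intv T x y) z ∈ intv T x y :=
  (isMedian_projOn_intv hT x y z).mem_left_mid

theorem DualThresholds.symm (h : DualThresholds T a b) : DualThresholds T b a := by
  refine ⟨h.1.symm, fun c hc ↦ ?_⟩
  rw [intv_comm] at hc ⊢
  exact (h.2 c hc).symm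

theorem DualThresholds.mem_cover (h : DualThresholds T a b) (z : V) :
    z ∈ intv T a b ∨ z ∈ sideSet T a b ∨ z ∈ sideSet T b a := by
  by_cases hz : z ∈ intv T a b
  · exact .inl hz
  have h_proj (hne : projOn T (intv T a b) z ≠ z) := isProjPt_projOn_of_ne hne
  right
  rcases h.2 z hz with hp | hp <;> rw [hp] at h_proj
  · exact .inl ((h_proj fun e ↦ hz (e ▸ left_mem_intv T a b)).2 b (right_mem_intv T a b))
  · exact .inr ((h_proj fun e ↦ hz (e ▸ right_mem_intv T a b)).2 a (left_mem_intv T a b))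

theorem DualThresholds.mem_intv_of_mem_sideSet (hT : T.IsTree) (hab : DualThresholds T a b)
    (hx : x ∈ sideSet T a b) (hc : c ∉ sideSet T a b) : a ∈ intv T x c := by
  rcases hab.mem_cover c with hcB | hcS | hcS'
  · exact (isProjPt_intv_of_mem_sideSet hT.connected hx).2 c hcB
  · exact absurd hcS hc
  · obtain ⟨m, hm⟩ := exists_isMedian hT x c a
    have hmS : m ∈ sideSet T a b := mem_sideSet_of_mem_intv hT.connected hx hm.mem_left_right
    rcases mem_intv_left_or_right hT hcS' hm.mem_mid_right with hmb | hmb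
    · exact absurd (mem_sideSet_of_mem_intv hT.connected hcS' hmb)
        (notMem_sideSet_of_mem hT.connected hab.1 hmS)
    · obtain rfl := eq_of_mem_sideSet_of_mem_intv hT.connected hmS (intv_comm T b a ▸ hmb)
      exact hm.mem_left_mid

end Sides

/-! ### Semi-hybrid preferences -/

section SemiHybridPreferences

variable {α : Type*} [Fintype α] [Nonempty α] {T : SimpleGraph α} {P : Pref α}
  {a b m m' x y : α}

theorem semiSP_peak (hT : T.Connected) (P : Pref α) : SemiSP T (peak P) P := by
  rw [SemiSP, intv_self hT]
  refine ⟨fun c d hc hd hcd ↦ absurd (hc.trans hd.symm) hcd, fun c hc ↦ ?_⟩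
  have h_proj : IsProjPt T {peak P} c (peak P) :=
    ⟨rfl, fun v hv ↦ hv ▸ right_mem_intv T c (peak P)⟩
  rw [h_proj.projOn_eq hT]
  exact (weaklyPrefers_iff.1 (peak_weaklyPrefers P c)).resolve_left fun h ↦ hc h.symm

theorem SemiSP.weaklyPrefers_of_isMedian (hT : T.IsTree) (hP : SemiSP T a P)
    (hm : IsMedian T m (peak P) y a) (hm' : IsMedian T m' x y a) : WeaklyPrefers P m m' := by
  rcases eq_or_ne m m' with rfl | hne
  · exact .refl P m
  rcases mem_intv_left_or_right hT hm.mem_mid_right hm'.mem_mid_right with hm'y | hm'a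
  · have h_proj := hm.swap_right.isProjPt hT
    have h_notMem : m' ∉ intv T (peak P) a := fun h ↦
      hne (eq_of_mem_intv_of_mem_intv hT.connected (h_proj.2 m' h) hm'y)
    have h_proj' : IsProjPt T (intv T (peak P) a) m' m :=
      ⟨h_proj.1, fun v hv ↦ (mem_intv_trans hT.connected (h_proj.2 v hv) hm'y).2⟩
    exact .of_prefers (h_proj'.projOn_eq hT.connected ▸ hP.2 m' h_notMem)
  · have h_mid := hm.mem_left_right
    rw [intv_comm] at h_mid hm'a
    obtain ⟨hm'_mid, h_between⟩ := mem_intv_trans hT.connected h_mid hm'a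
    rw [intv_comm] at hm'_mid h_between
    exact .of_prefers (hP.1 m m' hm.mem_left_right hm'_mid hne h_between)

namespace SemiHybridPref

theorem symm (hP : SemiHybridPref T a b P) : SemiHybridPref T b a P :=
  ⟨hP.2.1, hP.1, fun hp ↦ (hP.2.2 (intv_comm T b a ▸ hp)).symm⟩

theorem semiSP (hT : T.Connected) (hP : SemiHybridPref T a b P)
    (hp : peak P ∈ sideSet T a b) : SemiSP T a P := by
  by_cases hpa : peak P = a
  · exact hpa ▸ semiSP_peak hT P
  · exact (hP.1 ⟨hp, hpa⟩).1

theorem weaklyPrefers_of_peak_mem (hT : T.IsTree) (hab : DualThresholds T a b)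
    (hP : SemiHybridPref T a b P) (hp : peak P ∈ sideSet T a b) (hy : y ∉ sideSet T a b) :
    WeaklyPrefers P a y :=
  (hP.semiSP hT.connected hp).weaklyPrefers_of_isMedian hT
    ⟨hab.mem_intv_of_mem_sideSet hT hp hy, right_mem_intv T _ a, right_mem_intv T y a⟩
    ⟨left_mem_intv T y y, left_mem_intv T y a, left_mem_intv T y a⟩

theorem weaklyPrefers_of_peak_notMem (hab : DualThresholds T a b)
    (hP : SemiHybridPref T a b P) (hp : peak P ∉ sideSet T a b) (hy : y ∈ sideSet T a b) :
    WeaklyPrefers P a y := by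
  have h_best : IsBestOf P a (sideSet T a b) := by
    rcases hab.mem_cover (peak P) with hpB | hpS | hpS'
    · exact (hP.2.2 hpB).1
    · exact absurd hpS hp
    · by_cases hpb : peak P = b
      · exact (hP.2.2 (hpb ▸ right_mem_intv T a b)).1
      · exact (hP.2.1 ⟨hpS', hpb⟩).2
  exact h_best.weaklyPrefers hy

end SemiHybridPref

end SemiHybridPreferences

/-! ### Path-connected domains of semi-hybrid preferences -/

/-- Condition (i) in the definition of an `(a, b)`-semi-hybrid domain on the tree `T`: a
path-connected domain of semi-hybrid preferences. -/
structure ConnectedSemiHybridOn {α : Type*} [Fintype α] [Nonempty α] (D : Set (Pref α))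
    (T : SimpleGraph α) (a b : α) : Prop where
  isTree : T.IsTree
  dualThresholds : DualThresholds T a b
  semiHybridPref : ∀ P ∈ D, SemiHybridPref T a b P
  connected : (adjGraph D).Connected

namespace ConnectedSemiHybridOn

variable {α : Type*} [Fintype α] [Nonempty α] {D : Set (Pref α)} {T : SimpleGraph α}
  {P : Pref α} {a b s t x y z : α} {h : α → α}

theorem symm (hD : ConnectedSemiHybridOn D T a b) : ConnectedSemiHybridOn D T b a :=
  ⟨hD.isTree, hD.dualThresholds.symm, fun P hP ↦ (hD.semiHybridPref P hP).symm, hD.connected⟩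

theorem exists_peak_eq (hD : ConnectedSemiHybridOn D T a b) (x : α) : ∃ P ∈ D, peak P = x :=
  have : Nontrivial α := ⟨a, b, hD.dualThresholds.1⟩
  exists_peak_eq_of_connected hD.connected x

theorem mem_sideSet_of_adj (hD : ConnectedSemiHybridOn D T a b) (hst : (adjGraph D).Adj s t)
    (hs : s ∈ sideSet T a b) (hsa : s ≠ a) : t ∈ sideSet T a b := by
  by_contra ht
  obtain ⟨P, hP, -, -, rfl, rfl, -⟩ := domAdjacent_of_adj hst
  have h_eq := ((hD.semiHybridPref P hP).weaklyPrefers_of_peak_mem hD.isTree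
    hD.dualThresholds hs ht).antisymm (second_weaklyPrefers hsa.symm)
  exact ht (h_eq ▸ left_mem_sideSet T a b)

theorem same_part_of_adj (hD : ConnectedSemiHybridOn D T a b) (hst : (adjGraph D).Adj s t) :
    (s ∈ intv T a b ∧ t ∈ intv T a b) ∨ (s ∈ sideSet T a b ∧ t ∈ sideSet T a b) ∨
      (s ∈ sideSet T b a ∧ t ∈ sideSet T b a) := by
  have h_off {u v : α} (huv : (adjGraph D).Adj u v) (hu : u ∉ intv T a b) :
      (u ∈ sideSet T a b ∧ v ∈ sideSet T a b) ∨ (u ∈ sideSet T b a ∧ v ∈ sideSet T b a) := by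
    rcases (hD.dualThresholds.mem_cover u).resolve_left hu with hu' | hu'
    · exact .inl ⟨hu', hD.mem_sideSet_of_adj huv hu' fun e ↦ hu (e ▸ left_mem_intv T a b)⟩
    · exact .inr ⟨hu', hD.symm.mem_sideSet_of_adj huv hu' fun e ↦
        hu (e ▸ right_mem_intv T a b)⟩
  by_cases hs : s ∈ intv T a b
  · by_cases ht : t ∈ intv T a b
    · exact .inl ⟨hs, ht⟩
    · exact .inr ((h_off hst.symm ht).imp And.symm And.symm)
  · exact .inr (h_off hst hs)

theorem eq_or_adj_projOn_intv (hD : ConnectedSemiHybridOn D T a b)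
    (hst : (adjGraph D).Adj s t) :
    projOn T (intv T a b) s = projOn T (intv T a b) t ∨
      (adjGraph D).Adj (projOn T (intv T a b) s) (projOn T (intv T a b) t) := by
  have hT := hD.isTree.connected
  rcases hD.same_part_of_adj hst with ⟨hs, ht⟩ | ⟨hs, ht⟩ | ⟨hs, ht⟩
  · right
    rwa [projOn_of_mem hT hs, projOn_of_mem hT ht]
  · left
    rw [projOn_intv_of_mem_sideSet hT hs, projOn_intv_of_mem_sideSet hT ht]
  · left
    rw [intv_comm, projOn_intv_of_mem_sideSet hT hs, projOn_intv_of_mem_sideSet hT ht]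

theorem eq_or_adj_sideSet_retraction (hD : ConnectedSemiHybridOn D T a b)
    (hst : (adjGraph D).Adj s t) :
    (if s ∈ sideSet T a b then s else a) = (if t ∈ sideSet T a b then t else a) ∨
      (adjGraph D).Adj (if s ∈ sideSet T a b then s else a)
        (if t ∈ sideSet T a b then t else a) := by
  have h_exit {u v : α} (huv : (adjGraph D).Adj u v) (hu : u ∈ sideSet T a b)
      (hv : v ∉ sideSet T a b) : u = a := by
    by_contra hua
    exact hv (hD.mem_sideSet_of_adj huv hu hua)
  by_cases hs : s ∈ sideSet T a b <;> by_cases ht : t ∈ sideSet T a b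
  · right
    rwa [if_pos hs, if_pos ht]
  · left
    rw [if_pos hs, if_neg ht, h_exit hst hs ht]
  · left
    rw [if_neg hs, if_pos ht, h_exit hst.symm ht hs]
  · left
    rw [if_neg hs, if_neg ht]

theorem eq_of_notMem_intv (hD : ConnectedSemiHybridOn D T a b) (hh : PeakTruthful D h)
    (hx : x ∈ intv T a b) (hy : y ∈ intv T a b) (hhx : h x ∉ intv T a b) : h y = h x := by
  have hT := hD.isTree.connected
  have h_range : h (projOn T (intv T a b) x) ∉ Set.range (projOn T (intv T a b)) := by
    rw [projOn_of_mem hT hx]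
    rintro ⟨z, hz⟩
    exact hhx (hz ▸ projOn_intv_mem hD.isTree a b z)
  have h_const := hh.eq_of_notMem_range hD.connected
    (fun _ _ hst ↦ hD.eq_or_adj_projOn_intv hst) h_range (y := y)
  rwa [projOn_of_mem hT hx, projOn_of_mem hT hy] at h_const

theorem eq_of_notMem_sideSet (hD : ConnectedSemiHybridOn D T a b) (hh : PeakTruthful D h)
    (hx : x ∈ sideSet T a b) (hha : h a ∉ sideSet T a b) : h x = h a := by
  have ha := left_mem_sideSet T a b
  have h_const := hh.eq_of_notMem_range hD.connected
    (r := fun z ↦ if z ∈ sideSet T a b then z else a) (x := a) (y := x)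
    (fun _ _ hst ↦ hD.eq_or_adj_sideSet_retraction hst)
  simp only [if_pos ha, if_pos hx] at h_const
  refine h_const ?_
  rintro ⟨z, hz⟩
  refine hha (hz ▸ ?_)
  by_cases hzS : z ∈ sideSet T a b
  · simpa only [if_pos hzS] using hzS
  · simpa only [if_neg hzS] using ha

theorem weaklyPrefers_threshold_outcome (hD : ConnectedSemiHybridOn D T a b)
    (hh : PeakTruthful D h) (hP : P ∈ D) (hp : peak P ∈ sideSet T a b)
    (hha : h a ∈ intv T a b) (hhz : h z ∈ intv T a b) : WeaklyPrefers P (h a) (h z) := by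
  have hT := hD.isTree.connected
  by_cases ha_fix : h a = a
  · rw [ha_fix]
    by_cases hz : h z ∈ sideSet T a b
    · rw [eq_of_mem_sideSet_of_mem_intv hT hz hhz]
      exact .refl P a
    · exact (hD.semiHybridPref P hP).weaklyPrefers_of_peak_mem hD.isTree hD.dualThresholds hp hz
  · rw [← hD.eq_of_notMem_sideSet hh hp fun hS ↦
      ha_fix (eq_of_mem_sideSet_of_mem_intv hT hS hha)]
    exact hh P hP z

theorem peakTruthful_comp_projOn (hD : ConnectedSemiHybridOn D T a b) (hh : PeakTruthful D h)
    (h_maps : ∀ x ∈ intv T a b, h x ∈ intv T a b) :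
    PeakTruthful D fun x ↦ h (projOn T (intv T a b) x) := by
  intro P hP x
  change WeaklyPrefers P (h (projOn T (intv T a b) (peak P))) (h (projOn T (intv T a b) x))
  have hT := hD.isTree.connected
  have hx := h_maps _ (projOn_intv_mem hD.isTree a b x)
  rcases hD.dualThresholds.mem_cover (peak P) with hp | hp | hp
  · rw [projOn_of_mem hT hp]
    exact hh P hP _
  · rw [projOn_intv_of_mem_sideSet hT hp]
    exact hD.weaklyPrefers_threshold_outcome hh hP hp (h_maps a (left_mem_intv T a b)) hx
  · have hb := h_maps b (right_mem_intv T a b)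
    rw [intv_comm] at hx hb ⊢
    rw [projOn_intv_of_mem_sideSet hT hp]
    exact hD.symm.weaklyPrefers_threshold_outcome hh hP hp hb hx

end ConnectedSemiHybridOn

/-! ### Two voters -/

section SideExtension

variable {α : Type*} [Fintype α] {T : SimpleGraph α} {a b x y : α} {F : α → α → α}

/-- `F`, except that at two peaks `x` and `y` on the side of `a` the outcome is the median of `x`,
`y` and `a`, that is, the projection of `a` onto `⟨x, y|T⟩`. This makes a rule that is unanimous
only on the free zone unanimous on the side of `a` too. -/
noncomputable def sideExtension (T : SimpleGraph α) (a b : α) (F : α → α → α) (x y : α) : α :=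
  if x ∈ sideSet T a b ∧ y ∈ sideSet T a b then projOn T (intv T x y) a else F x y

theorem sideExtension_of_mem (hx : x ∈ sideSet T a b) (hy : y ∈ sideSet T a b) :
    sideExtension T a b F x y = projOn T (intv T x y) a :=
  if_pos ⟨hx, hy⟩

theorem sideExtension_of_notMem_left (hx : x ∉ sideSet T a b) :
    sideExtension T a b F x y = F x y :=
  if_neg fun h ↦ hx h.1

theorem sideExtension_of_notMem_right (hy : y ∉ sideSet T a b) :
    sideExtension T a b F x y = F x y :=
  if_neg fun h ↦ hy h.2

theorem sideExtension_self (hT : T.IsTree) (hx : x ∈ sideSet T a b) :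
    sideExtension T a b F x x = x := by
  have h_mem := projOn_intv_mem hT x x a
  rw [intv_self hT.connected] at h_mem
  rw [sideExtension_of_mem hx hx, intv_self hT.connected]
  exact h_mem

theorem sideExtension_swap (T : SimpleGraph α) (a b : α) (F : α → α → α) (x y : α) :
    sideExtension T a b (fun u v ↦ F v u) x y = sideExtension T a b F y x := by
  simp only [sideExtension, and_comm, intv_comm]

theorem sideExtension_of_mem_intv (hT : T.IsTree) (hFa : F a a = a) (hx : x ∈ intv T a b)
    (hy : y ∈ intv T a b) : sideExtension T a b F x y = F x y := by
  by_cases hS : x ∈ sideSet T a b ∧ y ∈ sideSet T a b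
  · rw [eq_of_mem_sideSet_of_mem_intv hT.connected hS.1 hx,
      eq_of_mem_sideSet_of_mem_intv hT.connected hS.2 hy, hFa]
    exact sideExtension_self hT (left_mem_sideSet T a b)
  · exact if_neg hS

end SideExtension

section TwoVoters

variable {α : Type*} [Fintype α] [Nonempty α] {D : Set (Pref α)} {T : SimpleGraph α}
  {a b y : α} {F : α → α → α}

/-- Strategy-proofness of a two-voter rule which depends only on the reported peaks. -/
structure PeakTruthfulPair (D : Set (Pref α)) (F : α → α → α) : Prop where
  fst : ∀ y, PeakTruthful D fun x ↦ F x y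
  snd : ∀ x, PeakTruthful D fun y ↦ F x y

namespace ConnectedSemiHybridOn

theorem peakTruthful_sideExtension (hD : ConnectedSemiHybridOn D T a b)
    (hF : PeakTruthful D fun x ↦ F x y)
    (hFa : y ∈ sideSet T a b → ∀ x ∈ sideSet T a b, F x y = a) :
    PeakTruthful D fun x ↦ sideExtension T a b F x y := by
  intro P hP x
  change WeaklyPrefers P (sideExtension T a b F (peak P) y) (sideExtension T a b F x y)
  have hT := hD.isTree
  have hP_hybrid := hD.semiHybridPref P hP
  have h_truth : WeaklyPrefers P (F (peak P) y) (F x y) := hF P hP x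
  by_cases hy : y ∈ sideSet T a b
  swap
  · rwa [sideExtension_of_notMem_right hy, sideExtension_of_notMem_right hy]
  have h_median := isMedian_projOn_intv hT
  by_cases hp : peak P ∈ sideSet T a b
  · have h_best {m z : α} (hm : IsMedian T m z y a) :
        WeaklyPrefers P (projOn T (intv T (peak P) y) a) m :=
      (hP_hybrid.semiSP hT.connected hp).weaklyPrefers_of_isMedian hT (h_median _ _ _) hm
    rw [sideExtension_of_mem hp hy]
    by_cases hx : x ∈ sideSet T a b
    · rw [sideExtension_of_mem hx hy]
      exact h_best (h_median x y a)
    · rw [sideExtension_of_notMem_left hx]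
      refine (h_best ⟨left_mem_intv T a y, left_mem_intv T a a, right_mem_intv T y a⟩).trans ?_
      rwa [hFa hy _ hp] at h_truth
  · rw [sideExtension_of_notMem_left hp]
    by_cases hx : x ∈ sideSet T a b
    · rw [sideExtension_of_mem hx hy]
      rw [hFa hy x hx] at h_truth
      exact h_truth.trans <| hP_hybrid.weaklyPrefers_of_peak_notMem hD.dualThresholds hp <|
        mem_sideSet_of_mem_intv hT.connected hx (h_median x y a).mem_left_right
    · rwa [sideExtension_of_notMem_left hx]

theorem peakTruthfulPair_sideExtension (hD : ConnectedSemiHybridOn D T a b)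
    (hF : PeakTruthfulPair D F)
    (hFa : ∀ x ∈ sideSet T a b, ∀ y ∈ sideSet T a b, F x y = a) :
    PeakTruthfulPair D (sideExtension T a b F) := by
  refine ⟨fun y ↦ hD.peakTruthful_sideExtension (hF.fst y) fun hy x hx ↦ hFa x hx y hy,
    fun x ↦ ?_⟩
  simp only [← sideExtension_swap T a b F]
  exact hD.peakTruthful_sideExtension (hF.snd x) fun hx y hy ↦ hFa x hx y hy

theorem peakTruthfulPair_comp_projOn (hD : ConnectedSemiHybridOn D T a b)
    (hF : PeakTruthfulPair D F)
    (h_maps : ∀ x ∈ intv T a b, ∀ y ∈ intv T a b, F x y ∈ intv T a b) :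
    PeakTruthfulPair D fun x y ↦ F (projOn T (intv T a b) x) (projOn T (intv T a b) y) where
  fst y := hD.peakTruthful_comp_projOn (hF.fst _) fun x hx ↦
    h_maps x hx _ (projOn_intv_mem hD.isTree a b y)
  snd x := hD.peakTruthful_comp_projOn (hF.snd _)
    (h_maps _ (projOn_intv_mem hD.isTree a b x))

theorem exists_unanimous_extension (hD : ConnectedSemiHybridOn D T a b)
    (hF : PeakTruthfulPair D F)
    (h_maps : ∀ x ∈ intv T a b, ∀ y ∈ intv T a b, F x y ∈ intv T a b)
    (h_self : ∀ x ∈ intv T a b, F x x = x) :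
    ∃ G, PeakTruthfulPair D G ∧ (∀ x, G x x = x) ∧
      ∀ x ∈ intv T a b, ∀ y ∈ intv T a b, G x y = F x y := by
  have hT := hD.isTree
  have h_disjoint {z : α} := notMem_sideSet_of_mem (z := z) hT.connected hD.dualThresholds.1
  have ha := h_self a (left_mem_intv T a b)
  have hb := h_self b (right_mem_intv T a b)
  set F₀ : α → α → α := fun x y ↦ F (projOn T (intv T a b) x) (projOn T (intv T a b) y)
  have hF₀ {x y : α} (hx : x ∈ intv T a b) (hy : y ∈ intv T a b) : F₀ x y = F x y := by
    simp only [F₀, projOn_of_mem hT.connected hx, projOn_of_mem hT.connected hy]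
  have hF₀_a : ∀ x ∈ sideSet T a b, ∀ y ∈ sideSet T a b, F₀ x y = a := by
    intro x hx y hy
    simp only [F₀, projOn_intv_of_mem_sideSet hT.connected hx,
      projOn_intv_of_mem_sideSet hT.connected hy, ha]
  set F₁ := sideExtension T a b F₀
  have hF₁_b : ∀ x ∈ sideSet T b a, ∀ y ∈ sideSet T b a, F₁ x y = b := by
    intro x hx y hy
    simp only [F₁, sideExtension_of_notMem_left fun h ↦ h_disjoint h hx, F₀, intv_comm T a b,
      projOn_intv_of_mem_sideSet hT.connected hx, projOn_intv_of_mem_sideSet hT.connected hy, hb]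
  have hF₂ {x y : α} (hx : x ∈ intv T a b) (hy : y ∈ intv T a b) :
      sideExtension T b a F₁ x y = F x y := by
    have hb_mem := left_mem_sideSet T b a
    have ha_mem := left_mem_sideSet T a b
    calc sideExtension T b a F₁ x y
        = F₁ x y := sideExtension_of_mem_intv hT (hF₁_b b hb_mem b hb_mem)
          (intv_comm T a b ▸ hx) (intv_comm T a b ▸ hy)
      _ = F₀ x y := sideExtension_of_mem_intv hT (hF₀_a a ha_mem a ha_mem) hx hy
      _ = F x y := hF₀ hx hy
  refine ⟨sideExtension T b a F₁, ?_, fun x ↦ ?_, fun x hx y hy ↦ hF₂ hx hy⟩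
  · exact hD.symm.peakTruthfulPair_sideExtension (hD.peakTruthfulPair_sideExtension
      (hD.peakTruthfulPair_comp_projOn hF h_maps) hF₀_a) hF₁_b
  · rcases hD.dualThresholds.mem_cover x with hx | hx | hx
    · rw [hF₂ hx hx, h_self x hx]
    · rw [sideExtension_of_notMem_left (h_disjoint hx)]
      exact sideExtension_self hT hx
    · exact sideExtension_self hT hx

end ConnectedSemiHybridOn

end TwoVoters

/-! ### Many voters -/

section ManyVoters

variable {α ι : Type*} [Fintype α] [Nonempty α] [DecidableEq ι] {D : Set (Pref α)}
  {T : SimpleGraph α} {a b : α} {φ : (ι → α) → α} {S S' : Set ι} {x x' : ι → α}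

/-- A tops-only strategy-proof rule, as a function of the peaks reported by the voters `ι`. -/
structure IsPeakRule (D : Set (Pref α)) (φ : (ι → α) → α) : Prop where
  truthful : ∀ x i, PeakTruthful D fun y ↦ φ (Function.update x i y)
  unanimous : ∀ x, φ (fun _ ↦ x) = x

/-- The voters in `S` are decisive on `B`: the outcome is `x` whenever they all report `x` and all
others report the same `y`. -/
def Decisive (φ : (ι → α) → α) (B : Set α) (S : Set ι) : Prop :=
  ∀ x ∈ B, ∀ y ∈ B, φ (S.piecewise (fun _ ↦ x) fun _ ↦ y) = x

/-- Every rule of the voters `ι` which depends only on the peaks behaves like a dictatorship on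
`B`. -/
def PeakDictatorialOn (ι : Type*) [DecidableEq ι] (D : Set (Pref α)) (B : Set α) : Prop :=
  ∀ φ : (ι → α) → α, IsPeakRule D φ → ∃ i, ∀ x, (∀ j, x j ∈ B) → φ x = x i

namespace IsPeakRule

theorem weaklyPrefers [Finite ι] (hφ : IsPeakRule D φ) {P : Pref α} (hP : P ∈ D)
    (h : ∀ i, x i = peak P ∨ x i = x' i) : WeaklyPrefers P (φ x) (φ x') := by
  cases nonempty_fintype ι
  have h_switch (s : Finset ι) : WeaklyPrefers P (φ x) (φ (s.piecewise x' x)) := by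
    induction s using Finset.induction_on with
    | empty => simpa only [Finset.piecewise_empty] using .refl P (φ x)
    | insert i s hi ih =>
      have hi_eq : s.piecewise x' x i = x i := s.piecewise_eq_of_notMem _ _ hi
      rw [Finset.piecewise_insert]
      rcases h i with h_peak | h_same
      · have h_step := hφ.truthful (s.piecewise x' x) i P hP (x' i)
        simp only [← h_peak, ← hi_eq, Function.update_eq_self] at h_step
        exact ih.trans h_step
      · rwa [← h_same, ← hi_eq, Function.update_eq_self]
  simpa only [Finset.piecewise_univ] using h_switch Finset.univ

theorem eq_of_forall_eq_or_eq [Finite ι] (hφ : IsPeakRule D φ)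
    (h_rich : ∃ P ∈ D, peak P = φ x) (h : ∀ i, x' i = φ x ∨ x' i = x i) : φ x' = φ x := by
  obtain ⟨P, hP, h_peak⟩ := h_rich
  refine (hφ.weaklyPrefers hP fun i ↦ ?_).antisymm (h_peak ▸ peak_weaklyPrefers P (φ x'))
  rw [h_peak]
  exact h i

theorem peakTruthfulPair [Finite ι] (hφ : IsPeakRule D φ) (S S' : Set ι) (z : ι → α) :
    PeakTruthfulPair D fun x y ↦ φ (S.piecewise (fun _ ↦ x) (S'.piecewise (fun _ ↦ y) z)) := by
  constructor
  · intro y P hP x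
    refine hφ.weaklyPrefers hP fun i ↦ ?_
    by_cases hi : i ∈ S <;> simp [hi]
  · intro x P hP y
    refine hφ.weaklyPrefers hP fun i ↦ ?_
    by_cases hi : i ∈ S
    · simp [hi]
    · by_cases hi' : i ∈ S' <;> simp [hi, hi']

theorem mem_intv [Finite ι] (hφ : IsPeakRule D φ) (hD : ConnectedSemiHybridOn D T a b)
    (hx : ∀ i, x i ∈ intv T a b) : φ x ∈ intv T a b := by
  cases nonempty_fintype ι
  by_contra h_out
  have ha := left_mem_intv T a b
  have h_switch (s : Finset ι) : φ (s.piecewise (fun _ ↦ a) x) = φ x := by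
    induction s using Finset.induction_on with
    | empty => rw [Finset.piecewise_empty]
    | insert i s hi ih =>
      let z := s.piecewise (fun _ ↦ a) x
      have hz : z i = x i := s.piecewise_eq_of_notMem _ _ hi
      have h_step := hD.eq_of_notMem_intv (hφ.truthful z i) (hz ▸ hx i) ha
        (by rwa [Function.update_eq_self, ih])
      rw [Function.update_eq_self] at h_step
      rw [Finset.piecewise_insert, h_step, ih]
  have h_const := h_switch Finset.univ
  rw [Finset.piecewise_univ, hφ.unanimous] at h_const
  exact h_out (h_const ▸ ha)

end IsPeakRule

theorem PeakTruthfulPair.isPeakRule {F : α → α → α} (hF : PeakTruthfulPair D F)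
    (h_self : ∀ x, F x x = x) : IsPeakRule D fun x : Fin 2 → α ↦ F (x 0) (x 1) := by
  refine ⟨fun x i ↦ ?_, h_self⟩
  fin_cases i
  · simpa using hF.fst (x 1)
  · simpa using hF.snd (x 0)

namespace ConnectedSemiHybridOn

omit [DecidableEq ι] in
theorem not_decisive_compl (hD : ConnectedSemiHybridOn D T a b)
    (hS : Decisive φ (intv T a b) S) : ¬ Decisive φ (intv T a b) Sᶜ := by
  intro hS'
  have ha := left_mem_intv T a b
  have hb := right_mem_intv T a b
  have h_compl := hS' b hb a ha
  rw [Set.piecewise_compl, hS a ha b hb] at h_compl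
  exact hD.dualThresholds.1 h_compl

theorem left_or_right_dictatorial (hD : ConnectedSemiHybridOn D T a b)
    (h₂ : PeakDictatorialOn (Fin 2) D (intv T a b)) {F : α → α → α} (hF : PeakTruthfulPair D F)
    (h_maps : ∀ x ∈ intv T a b, ∀ y ∈ intv T a b, F x y ∈ intv T a b)
    (h_self : ∀ x ∈ intv T a b, F x x = x) :
    (∀ x ∈ intv T a b, ∀ y ∈ intv T a b, F x y = x) ∨
      ∀ x ∈ intv T a b, ∀ y ∈ intv T a b, F x y = y := by
  obtain ⟨G, hG, hG_self, hG_eq⟩ := hD.exists_unanimous_extension hF h_maps h_self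
  obtain ⟨i, hi⟩ := h₂ _ (hG.isPeakRule hG_self)
  have h_outcome {x y : α} (hx : x ∈ intv T a b) (hy : y ∈ intv T a b) :
      F x y = ![x, y] i := by
    rw [← hG_eq x hx y hy, ← hi ![x, y] (by simp [Fin.forall_fin_two, hx, hy])]
    rfl
  fin_cases i
  · exact .inl fun x hx y hy ↦ h_outcome hx hy
  · exact .inr fun x hx y hy ↦ h_outcome hx hy

section Decisiveness

variable [Finite ι] (hD : ConnectedSemiHybridOn D T a b)
  (h₂ : PeakDictatorialOn (Fin 2) D (intv T a b)) (hφ : IsPeakRule D φ)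

include hD h₂ hφ

theorem left_or_right_group_decisive {z : ι → α} (hz : ∀ i, z i ∈ intv T a b)
    (h_self : ∀ x ∈ intv T a b, φ (S.piecewise (fun _ ↦ x) (S'.piecewise (fun _ ↦ x) z)) = x) :
    (∀ x ∈ intv T a b, ∀ y ∈ intv T a b,
        φ (S.piecewise (fun _ ↦ x) (S'.piecewise (fun _ ↦ y) z)) = x) ∨
      ∀ x ∈ intv T a b, ∀ y ∈ intv T a b,
        φ (S.piecewise (fun _ ↦ x) (S'.piecewise (fun _ ↦ y) z)) = y := by
  refine hD.left_or_right_dictatorial h₂ (hφ.peakTruthfulPair S S' z) (fun x hx y hy ↦ ?_) h_self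
  refine hφ.mem_intv hD fun i ↦ ?_
  by_cases hi : i ∈ S <;> by_cases hi' : i ∈ S' <;> simp [hi, hi', hx, hy, hz i]

theorem decisive_or_decisive_compl (S : Set ι) :
    Decisive φ (intv T a b) S ∨ Decisive φ (intv T a b) Sᶜ := by
  have h_groups := hD.left_or_right_group_decisive h₂ hφ (S := S) (S' := Set.univ)
    (fun _ ↦ left_mem_intv T a b) fun x _ ↦ by
      rw [Set.piecewise_univ, Set.piecewise_same, hφ.unanimous]
  simp only [Set.piecewise_univ] at h_groups
  refine h_groups.imp_right fun h x hx y hy ↦ ?_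
  rw [Set.piecewise_compl, h y hy x hx]

theorem decisive_of_eq {x y : α} (hx : x ∈ intv T a b) (hy : y ∈ intv T a b) (hxy : x ≠ y)
    (h : φ (S.piecewise (fun _ ↦ x) fun _ ↦ y) = x) :
    Decisive φ (intv T a b) S := by
  refine (hD.decisive_or_decisive_compl h₂ hφ S).resolve_right fun hS ↦ hxy ?_
  have h_compl := hS y hy x hx
  rwa [Set.piecewise_compl, h] at h_compl

theorem decisive_mono (hS : Decisive φ (intv T a b) S) (hSS' : S ⊆ S') :
    Decisive φ (intv T a b) S' := by
  have ha := left_mem_intv T a b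
  have hb := right_mem_intv T a b
  refine hD.decisive_of_eq h₂ hφ ha hb hD.dualThresholds.1 ?_
  have h_out := hS a ha b hb
  rw [← h_out]
  refine hφ.eq_of_forall_eq_or_eq (hD.exists_peak_eq _) fun i ↦ ?_
  rw [h_out]
  by_cases hi : i ∈ S'
  · simp [hi]
  · have hiS : i ∉ S := fun h ↦ hi (hSS' h)
    simp [hi, hiS]

theorem decisive_inter (hS : Decisive φ (intv T a b) S)
    (hS' : Decisive φ (intv T a b) S') :
    Decisive φ (intv T a b) (S ∩ S') := by
  have ha := left_mem_intv T a b
  have hb := right_mem_intv T a b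
  have h_groups := hD.left_or_right_group_decisive h₂ hφ (S := S ∩ S') (S' := S \ S')
    (fun _ ↦ ha) fun x hx ↦ by
      refine (congrArg φ (funext fun i ↦ ?_)).trans (hS x hx a ha)
      by_cases hi : i ∈ S <;> by_cases hi' : i ∈ S' <;> simp [hi, hi']
  rcases h_groups with h_inter | h_diff
  · refine hD.decisive_of_eq h₂ hφ hb ha hD.dualThresholds.1.symm ?_
    simpa only [Set.piecewise_same] using h_inter b hb a ha
  · have hS_diff : Decisive φ (intv T a b) (S \ S') := by
      refine hD.decisive_of_eq h₂ hφ hb ha hD.dualThresholds.1.symm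
        ((congrArg φ (funext fun i ↦ ?_)).trans (h_diff a ha b hb))
      by_cases hi : i ∈ S <;> by_cases hi' : i ∈ S' <;> simp [hi, hi']
    exact absurd (hD.decisive_mono h₂ hφ hS_diff fun i hi ↦ hi.2) (hD.not_decisive_compl hS')

theorem exists_decisive_singleton : ∃ i, Decisive φ (intv T a b) {i} := by
  let decisiveFilter : Filter ι :=
    { sets := {S | Decisive φ (intv T a b) S}
      univ_sets := fun x _ y _ ↦ by rw [Set.piecewise_univ, hφ.unanimous]
      sets_of_superset := hD.decisive_mono h₂ hφ
      inter_sets := hD.decisive_inter h₂ hφ }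
  let decisiveUltrafilter : Ultrafilter ι := .ofComplNotMemIff decisiveFilter fun S ↦
    ⟨(hD.decisive_or_decisive_compl h₂ hφ S).resolve_right, hD.not_decisive_compl⟩
  obtain ⟨i, hi⟩ := decisiveUltrafilter.eq_pure_of_finite
  refine ⟨i, show {i} ∈ decisiveUltrafilter from ?_⟩
  rw [hi]
  exact Set.mem_singleton i

end Decisiveness

theorem peakDictatorialOn [Finite ι] (hD : ConnectedSemiHybridOn D T a b)
    (h₂ : PeakDictatorialOn (Fin 2) D (intv T a b)) : PeakDictatorialOn ι D (intv T a b) := by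
  intro φ hφ
  obtain ⟨i, hi⟩ := hD.exists_decisive_singleton h₂ hφ
  refine ⟨i, fun x hx ↦ ?_⟩
  rw [← hi (x i) (hx i) (φ x) (hφ.mem_intv hD hx)]
  refine (hφ.eq_of_forall_eq_or_eq (hD.exists_peak_eq _) fun j ↦ ?_).symm
  by_cases hj : j = i
  · simp [hj]
  · simp [hj]

end ConnectedSemiHybridOn

end ManyVoters

/-! ### Rules on profiles of preferences -/

section PreferenceRules

variable {α : Type*} [Fintype α] [Nonempty α] {D : Set (Pref α)} {B : Set α} {n : ℕ}

theorem dictatorOn_of_peakDictatorialOn {f : (Fin n → Pref α) → α}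
    (hB : PeakDictatorialOn (Fin n) D B) (hrich : ∀ x, ∃ P ∈ D, peak P = x)
    (hf : IsRule D f) (hf_tops : TopsOnly D f) (hf_sp : StrategyProof D f) :
    DictatorOn D f B := by
  choose pref hpref hpeak using hrich
  have h_out {P : Fin n → Pref α} (hP : InDom D P) : f P = f fun i ↦ pref (peak (P i)) :=
    hf_tops P _ hP (fun i ↦ hpref _) fun i ↦ (hpeak _).symm
  have h_rule : IsPeakRule D fun x : Fin n → α ↦ f fun i ↦ pref (x i) := by
    refine ⟨fun x i P hP y ↦ ?_, fun x ↦ hf _ (fun _ ↦ hpref x) x fun _ ↦ hpeak x⟩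
    have h_dom : InDom D (Function.update (fun j ↦ pref (x j)) i P) :=
      (Function.forall_update_iff _ fun _ Q ↦ Q ∈ D).2 ⟨hP, fun j _ ↦ hpref (x j)⟩
    have h_peaks : (fun j ↦ peak (Function.update (fun j ↦ pref (x j)) i P j)) =
        Function.update x i (peak P) := by
      simpa only [Function.comp_def, hpeak] using
        Function.comp_update (peak (A := α)) (fun j ↦ pref (x j)) i P
    have h_prefs : Function.update (fun j ↦ pref (x j)) i (pref y) =
        fun j ↦ pref (Function.update x i y j) := (Function.comp_update pref x i y).symm
    have h_sp := weaklyPrefers_iff.2 (hf_sp _ h_dom i (pref y) (hpref y))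
    rw [Function.update_self, Function.update_idem, h_out h_dom, h_prefs] at h_sp
    simp only [congrFun h_peaks] at h_sp
    exact h_sp
  obtain ⟨i, hi⟩ := hB _ h_rule
  exact ⟨i, fun P hP hPB ↦ (h_out hP).trans (hi (fun j ↦ peak (P j)) hPB)⟩

theorem peakDictatorialOn_of_forall_dictatorOn (hrich : ∀ x, ∃ P ∈ D, peak P = x)
    (h : ∀ f : (Fin n → Pref α) → α, IsRule D f → TopsOnly D f → StrategyProof D f →
      DictatorOn D f B) : PeakDictatorialOn (Fin n) D B := by
  intro φ hφ
  choose pref hpref hpeak using hrich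
  obtain ⟨i, hi⟩ := h (fun P ↦ φ fun j ↦ peak (P j))
    (fun P _ x hx ↦ by simp only [hx, hφ.unanimous])
    (fun P P' _ _ hPP' ↦ by simp only [hPP'])
    fun P hP i Q _ ↦ by
      have h_peaks : (fun j ↦ peak (Function.update P i Q j)) =
          Function.update (fun j ↦ peak (P j)) i (peak Q) := Function.comp_update peak P i Q
      have h_truth : WeaklyPrefers (P i)
          (φ (Function.update (fun j ↦ peak (P j)) i (peak (P i))))
          (φ (Function.update (fun j ↦ peak (P j)) i (peak Q))) :=
        hφ.truthful (fun j ↦ peak (P j)) i (P i) (hP i) (peak Q)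
      rw [Function.update_eq_self i fun j ↦ peak (P j)] at h_truth
      simp only [h_peaks]
      exact weaklyPrefers_iff.1 h_truth
  refine ⟨i, fun x hx ↦ ?_⟩
  have h_dict := hi (fun j ↦ pref (x j)) (fun j ↦ hpref (x j))
  simp only [hpeak] at h_dict
  exact h_dict hx

theorem forall_dictatorOn_iff_peakDictatorialOn (hrich : ∀ x, ∃ P ∈ D, peak P = x) (n : ℕ) :
    (∀ f : (Fin n → Pref α) → α, IsRule D f → TopsOnly D f → StrategyProof D f →
      DictatorOn D f B) ↔ PeakDictatorialOn (Fin n) D B :=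
  ⟨peakDictatorialOn_of_forall_dictatorOn hrich,
    fun hB _ ↦ dictatorOn_of_peakDictatorialOn hB hrich⟩

end PreferenceRules

theorem stmt7_ramification_general {α : Type*} [Fintype α] [Nonempty α] (D : Set (Pref α))
    (T : SimpleGraph α) (a b : α) (hD : ConnectedSemiHybridOn D T a b) :
    (∀ f : (Fin 2 → Pref α) → α, IsRule D f → TopsOnly D f → StrategyProof D f →
        DictatorOn D f (intv T a b)) ↔
    (∀ n : ℕ, ∀ f : (Fin n → Pref α) → α, IsRule D f → TopsOnly D f → StrategyProof D f →
        DictatorOn D f (intv T a b)) := by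
  simp only [forall_dictatorOn_iff_peakDictatorialOn hD.exists_peak_eq]
  exact ⟨fun h₂ _ ↦ hD.peakDictatorialOn h₂, fun h ↦ h 2⟩

/-- Ramification Theorem: on an `(a,b)`-semi-hybrid domain
satisfying diversity, all two-voter tops-only strategy-proof rules behave like
dictatorships on the free zone iff for every `n ≥ 2` all `n`-voter tops-only
strategy-proof rules do. -/
theorem stmt7_ramification (D : Set (Pref A)) (hD : D.Nonempty)
    (hcard : 3 ≤ Fintype.card A)
    (T : SimpleGraph A) (a b : A) (hsh : SemiHybridDomainOn D T a b)
    (hdiv : Diversity D) :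
    (∀ f : (Fin 2 → Pref A) → A, IsRule D f → TopsOnly D f → StrategyProof D f →
        DictatorOn D f (intv T a b)) ↔
    (∀ n : ℕ, 2 ≤ n → ∀ f : (Fin n → Pref A) → A,
        IsRule D f → TopsOnly D f → StrategyProof D f →
        DictatorOn D f (intv T a b)) := by
  obtain ⟨hT, hab, hpref, hG, -, -⟩ := hsh
  have h_general := stmt7_ramification_general D T a b ⟨hT, hab, hpref, hG⟩
  exact ⟨fun h₂ n _ ↦ h_general.1 h₂ n, fun h ↦ h 2 le_rfl⟩
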